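/- Let G be a group, m ≥ 3, and let ε_m denote the composite map on m-tuples given by applying the braid moves β_2, then β_3, …, then β_m. For every m-tuple (σ1,…,σm) ∈ G^m, the m-fold iterate ε_m^m applied to (σ1,…,σm) yields a tuple that is simultaneously conjugate to (σ1,…,σm). -/

import Mathlib

namespace Braid

/-- The braid move βᵢ on `ℕ`-indexed tuples (0-indexed): `braidMove j` is the
braid move β_{j+2} of the paper, acting on entries `j` and `j+1`:
`(…, σⱼ, σⱼ₊₁, …) ↦ (…, σⱼσⱼ₊₁σⱼ⁻¹, σⱼ, …)`. -/
def braidMove {G : Type*} [Group G] (j : ℕ) (σ : ℕ → G) : ℕ → G := fun k =>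
  if k = j then σ j * σ (j + 1) * (σ j)⁻¹ else if k = j + 1 then σ j else σ k

/-- `epsMap m` is ε_m: apply β₂, then β₃, …, then β_m (left to right). -/
def epsMap {G : Type*} [Group G] (m : ℕ) (σ : ℕ → G) : ℕ → G :=
  (List.range (m - 1)).foldl (fun t j => braidMove j t) σ

end Braid

/-!
The braid moves β₂, β₃, … carry `σ 0` to the right past `σ 1`, `σ 2`, …, conjugating each of them
by `σ 0`; hence ε_m is the cyclic rotation of the tuple followed by conjugation by its old first
entry. If `j` steps have conjugated the rotated tuple by `γ`, its first entry is `γ * σ j * γ⁻¹`; the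
next step conjugates by this element, so that the conjugator becomes `γ * σ j`. After `m` steps the
rotation is undone and what remains is conjugation by `σ 0 * σ 1 * ⋯ * σ (m - 1)`; in the braid
group, ε_m ^ m is the full twist.
-/

namespace Braid

variable {G : Type*} [Group G]

theorem foldl_braidMove_range_apply (n : ℕ) (σ : ℕ → G) (k : ℕ) :
    (List.range n).foldl (fun t j => braidMove j t) σ k =
      if k < n then σ 0 * σ (k + 1) * (σ 0)⁻¹ else if k = n then σ 0 else σ k := by
  induction n generalizing k with
  | zero => by_cases hk : k = 0 <;> simp [hk]
  | succ n ih =>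
    rw [List.range_succ, List.foldl_append, List.foldl_cons, List.foldl_nil]
    simp only [braidMove, ih]
    grind

theorem epsMap_apply_of_lt {m k : ℕ} (hk : k < m) (σ : ℕ → G) :
    epsMap m σ k = σ 0 * σ ((k + 1) % m) * (σ 0)⁻¹ := by
  rw [epsMap, foldl_braidMove_range_apply]
  obtain hlt | rfl : k + 1 < m ∨ m = k + 1 := by omega
  · rw [if_pos (by omega), Nat.mod_eq_of_lt hlt]
  · simp

theorem iterate_epsMap_apply_of_lt {m k : ℕ} (hk : k < m) (σ : ℕ → G) (j : ℕ) :
    (epsMap m)^[j] σ k =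
      ((List.range j).map fun i => σ (i % m)).prod * σ ((k + j) % m) *
        ((List.range j).map fun i => σ (i % m)).prod⁻¹ := by
  induction j generalizing k with
  | zero => simp [Nat.mod_eq_of_lt hk]
  | succ j ih =>
    have hm : 0 < m := by omega
    have hindex : ((k + 1) % m + j) % m = (k + (j + 1)) % m := by
      rw [Nat.mod_add_mod, add_assoc, add_comm 1 j]
    rw [Function.iterate_succ_apply', epsMap_apply_of_lt hk, ih hm, ih (Nat.mod_lt _ hm), hindex,
      zero_add, List.prod_range_succ]
    group

end Braid

open Braid in
theorem statement1_general {G : Type*} [Group G] {m k : ℕ} (hk : k < m) (σ : ℕ → G) :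
    (epsMap m)^[m] σ k =
      ((List.range m).map σ).prod * σ k * ((List.range m).map σ).prod⁻¹ := by
  have hmap : ((List.range m).map fun i => σ (i % m)) = (List.range m).map σ :=
    List.map_congr_left fun i hi => by rw [Nat.mod_eq_of_lt (List.mem_range.mp hi)]
  rw [iterate_epsMap_apply_of_lt hk, hmap, Nat.add_mod_right, Nat.mod_eq_of_lt hk]

open Braid in
/-- For `m ≥ 3`, the `m`-fold iterate of ε_m = β₂β₃⋯β_m applied to
`(σ₁, …, σ_m)` yields a tuple that is simultaneously conjugate to `(σ₁, …, σ_m)`. -/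
theorem statement1 {G : Type*} [Group G] (m : ℕ) (hm : 3 ≤ m) (σ : ℕ → G) :
    ∃ γ : G, ∀ k, k < m → γ⁻¹ * ((epsMap m)^[m] σ) k * γ = σ k := by
  exact ⟨((List.range m).map σ).prod, fun k hk => by rw [statement1_general hk]; group⟩
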